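/- The maximum size of a 2-arc in PHG(2, ℤ/4ℤ) is 7: there exists a set of 7 points of PHG(2, ℤ/4ℤ) with at most 2 points on each line, but every set of 8 points of PHG(2, ℤ/4ℤ) contains 3 points lying on a common line. -/

import Mathlib

/-- A point of a projective Hjelmslev geometry PHG(n-1, R): a free rank-1 submodule
of Rⁿ, i.e. the R-span of a vector having at least one unit coordinate. -/
def IsPoint {R : Type} [CommRing R] {n : ℕ} (P : Submodule R (Fin n → R)) : Prop :=
  ∃ v : Fin n → R, (∃ i, IsUnit (v i)) ∧ P = Submodule.span R {v}

/-- A free rank-k submodule of Rⁿ: a submodule linearly isomorphic to Rᵏ. -/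
def IsFreeRank {R : Type} [CommRing R] {n : ℕ} (k : ℕ) (L : Submodule R (Fin n → R)) : Prop :=
  Nonempty ((Fin k → R) ≃ₗ[R] L)

/-- A line of PHG(2, R): a free rank-2 submodule of R³. -/
abbrev IsLine {R : Type} [CommRing R] (L : Submodule R (Fin 3 → R)) : Prop := IsFreeRank 2 L

abbrev R4 := ZMod 4


open Finset

/-- Representatives of the 28 points, four consecutive ones for each neighbour class. -/
def rep : Fin 28 → Fin 3 → R4 := ![![1, 0, 0], ![1, 0, 2], ![1, 2, 0], ![1, 2, 2], ![0, 1, 0], ![0, 1, 2], ![2, 1, 0], ![2, 1, 2], ![1, 1, 0], ![1, 1, 2], ![1, 3, 0], ![1, 3, 2], ![0, 0, 1], ![0, 2, 1], ![2, 0, 1], ![2, 2, 1], ![1, 0, 1], ![1, 0, 3], ![1, 2, 1], ![1, 2, 3], ![0, 1, 1], ![0, 1, 3], ![2, 1, 1], ![2, 1, 3], ![1, 1, 1], ![1, 1, 3], ![1, 3, 1], ![1, 3, 3]]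

/-- Incidence bit masks of the 28 lines. -/
def mask : Fin 28 → ℕ := ![3158064, 12632112, 12595392, 3195072, 217091, 827395, 806924, 237580, 201366528, 50359296, 50369280, 201351936, 1365, 2725, 2650, 1450, 168427664, 84213904, 84541536, 168099936, 111149065, 156237833, 161480710, 105906182, 6686208, 10028544, 9832704, 6883584]

/-- Two generating points of every line. -/
def genA : Fin 28 → Fin 28 := ![4, 4, 6, 6, 0, 0, 2, 2, 10, 10, 8, 8, 0, 0, 1, 1, 4, 4, 5, 5, 0, 0, 1, 1, 9, 9, 8, 8]

/-- The second generating point. -/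
def genB : Fin 28 → Fin 28 := ![12, 14, 12, 14, 12, 13, 12, 13, 12, 13, 12, 13, 4, 5, 4, 5, 17, 16, 17, 16, 21, 20, 21, 20, 17, 16, 17, 16]

/-- A 2-arc with seven points. -/
def arc : Fin 7 → Fin 3 → R4 := ![![1, 0, 0], ![0, 1, 0], ![1, 1, 2], ![0, 0, 1], ![1, 2, 1], ![2, 1, 3], ![1, 3, 3]]

/-- Collinearity read off the masks. -/
def col (x y z : Fin 28) : Prop :=
  ∃ l : Fin 28, (mask l).testBit x = true ∧ (mask l).testBit y = true ∧ (mask l).testBit z = true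

instance (x y z : Fin 28) : Decidable (col x y z) := by unfold col; infer_instance

lemma two_in_class : ∀ x y : Fin 28, x < y → x.val / 4 = y.val / 4 →
    ∃ d : Fin 7, d.val ≠ x.val / 4 ∧ ∀ z : Fin 28,
      (z.val / 4 = d.val ∨ z.val / 4 + 1 = (x.val / 4 + 1) ^^^ (d.val + 1)) → col x y z := by
  decide +kernel

lemma three_in_class : ∀ x y : Fin 28, x < y → x.val / 4 = y.val / 4 →
    ∀ z : Fin 28, y < z → x.val / 4 = z.val / 4 → ∀ w : Fin 28, w.val / 4 ≠ x.val / 4 →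
      col x y w ∨ col x z w ∨ col y z w := by
  decide +kernel

lemma mask_gen : ∀ l x : Fin 28, (mask l).testBit x = true →
    ∃ s t : R4, s • rep (genA l) + t • rep (genB l) = rep x := by
  decide +kernel

lemma gen_indep : ∀ l : Fin 28, ∀ s t : R4,
    s • rep (genA l) + t • rep (genB l) = 0 → s = 0 ∧ t = 0 := by
  decide +kernel

lemma rep_unit : ∀ x : Fin 28, ∃ i, rep x i * rep x i = 1 := by decide +kernel

lemma rep_inj : ∀ x y : Fin 28, ∀ c : R4, c • rep x = rep y → x = y := by decide +kernel

lemma rep_surj : ∀ a b c : R4, (∃ i, ∃ u : R4, (![a, b, c] : Fin 3 → R4) i * u = 1) →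
    ∃ x : Fin 28, ∃ s t : R4, s • rep x = ![a, b, c] ∧ t • (![a, b, c] : Fin 3 → R4) = rep x := by
  decide +kernel

lemma arc_unit : ∀ x : Fin 7, ∃ i, arc x i * arc x i = 1 := by decide +kernel

lemma arc_inj : ∀ x y : Fin 7, ∀ c : R4, c • arc x = arc y → x = y := by decide +kernel

/-- The 3 by 3 determinant. -/
def dt (u v w : Fin 3 → R4) : R4 :=
  u 0 * (v 1 * w 2 - v 2 * w 1) - u 1 * (v 0 * w 2 - v 2 * w 0) + u 2 * (v 0 * w 1 - v 1 * w 0)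

lemma arc_det : ∀ x y z : Fin 7, x ≠ y → x ≠ z → y ≠ z → dt (arc x) (arc y) (arc z) ≠ 0 := by
  decide +kernel

lemma count_contra : ∀ n : Fin 7 → Fin 3, ∑ c, (n c).val = 8 →
    ¬ (∀ c : Fin 7, n c = 2 → ∃ d : Fin 7, d ≠ c ∧ n d = 0 ∧
      ∀ e : Fin 7, e.val + 1 = (c.val + 1) ^^^ (d.val + 1) → n e = 0) := by
  decide +kernel

lemma det_line (L : Submodule R4 (Fin 3 → R4)) (hL : IsLine L) (u v w : Fin 3 → R4)
    (hu : u ∈ L) (hv : v ∈ L) (hw : w ∈ L) : dt u v w = 0 := by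
  obtain ⟨φ⟩ := hL
  have key : ∀ u ∈ L, ∃ s t : R4, u = s • (φ ![1, 0] : Fin 3 → R4) + t • (φ ![0, 1] : Fin 3 → R4) := by
    intro u hu
    refine ⟨φ.symm ⟨u, hu⟩ 0, φ.symm ⟨u, hu⟩ 1, ?_⟩
    have h : (φ.symm ⟨u, hu⟩) = φ.symm ⟨u, hu⟩ 0 • ![1, 0] + φ.symm ⟨u, hu⟩ 1 • ![0, 1] := by
      ext i; fin_cases i <;> simp
    have h2 := congrArg (fun q => ((φ q : L) : Fin 3 → R4)) h
    simpa only [LinearEquiv.apply_symm_apply, map_add, map_smul, Submodule.coe_add,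
      Submodule.coe_smul] using h2
  obtain ⟨s1, t1, rfl⟩ := key u hu
  obtain ⟨s2, t2, rfl⟩ := key v hv
  obtain ⟨s3, t3, rfl⟩ := key w hw
  simp only [dt, Pi.add_apply, Pi.smul_apply, smul_eq_mul]
  ring

/-- The point spanned by a representative. -/
def pt (x : Fin 28) : Submodule R4 (Fin 3 → R4) := Submodule.span R4 {rep x}

lemma pt_inj : Function.Injective pt := by
  intro x y h
  have : rep y ∈ pt x := by rw [h]; exact Submodule.mem_span_singleton_self _
  obtain ⟨c, hc⟩ := Submodule.mem_span_singleton.1 this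
  exact rep_inj x y c hc

lemma pt_surj (P : Submodule R4 (Fin 3 → R4)) (h : IsPoint P) : ∃ x, pt x = P := by
  obtain ⟨v, ⟨i, hi⟩, rfl⟩ := h
  have hv : v = ![v 0, v 1, v 2] := by ext j; fin_cases j <;> rfl
  obtain ⟨u, hu⟩ := hi.exists_right_inv
  obtain ⟨x, s, t, h1, h2⟩ := rep_surj (v 0) (v 1) (v 2) ⟨i, u, by rw [← hv]; exact hu⟩
  rw [← hv] at h1 h2
  refine ⟨x, le_antisymm ?_ ?_⟩
  · exact (Submodule.span_singleton_le_iff_mem _ _).2 (Submodule.mem_span_singleton.2 ⟨t, h2⟩)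
  · exact (Submodule.span_singleton_le_iff_mem _ _).2 (Submodule.mem_span_singleton.2 ⟨s, h1⟩)

lemma col_line (x y z : Fin 28) (h : col x y z) :
    ∃ L, IsLine L ∧ pt x ≤ L ∧ pt y ≤ L ∧ pt z ≤ L := by
  obtain ⟨l, hx, hy, hz⟩ := h
  let f : (Fin 2 → R4) →ₗ[R4] (Fin 3 → R4) :=
    { toFun := fun q => q 0 • rep (genA l) + q 1 • rep (genB l)
      map_add' := by intro a b; simp only [Pi.add_apply, add_smul]; abel
      map_smul' := by intro a b; simp [mul_smul] }
  have hf : Function.Injective f := by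
    rw [injective_iff_map_eq_zero]
    intro q hq
    obtain ⟨h0, h1⟩ := gen_indep l (q 0) (q 1) hq
    ext i; fin_cases i
    · exact h0
    · exact h1
  have hm : ∀ x : Fin 28, (mask l).testBit x = true → pt x ≤ LinearMap.range f := by
    intro x hx
    obtain ⟨s, t, h⟩ := mask_gen l x hx
    exact (Submodule.span_singleton_le_iff_mem _ _).2 ⟨![s, t], h⟩
  exact ⟨LinearMap.range f, ⟨LinearEquiv.ofInjective f hf⟩, hm x hx, hm y hy, hm z hz⟩

lemma no_eight (T : Finset (Fin 28)) (hT : T.card = 8) :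
    ∃ x ∈ T, ∃ y ∈ T, ∃ z ∈ T, x ≠ y ∧ x ≠ z ∧ y ≠ z ∧ col x y z := by
  by_contra hcon
  push Not at hcon
  let k : Fin 28 → Fin 7 := fun x => ⟨x.val / 4, by omega⟩
  let F : Fin 7 → Finset (Fin 28) := fun c => T.filter (fun x => k x = c)
  have hsum : ∑ c, (F c).card = 8 := by
    rw [← hT]
    exact (Finset.card_eq_sum_card_fiberwise (fun x _ => Finset.mem_univ (k x))).symm
  have memF : ∀ x c, x ∈ F c ↔ x ∈ T ∧ x.val / 4 = c.val := by
    intro x c; simp [F, k, Fin.ext_iff]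
  have h3 : ∀ c, (F c).card ≤ 2 := by
    intro c
    by_contra h
    push Not at h
    have hsorted : ∃ x y z, x ∈ F c ∧ y ∈ F c ∧ z ∈ F c ∧ x < y ∧ y < z := by
      let g := (F c).orderEmbOfFin rfl
      refine ⟨g ⟨0, by omega⟩, g ⟨1, by omega⟩, g ⟨2, by omega⟩, ?_, ?_, ?_, ?_, ?_⟩
      · exact Finset.orderEmbOfFin_mem _ _ _
      · exact Finset.orderEmbOfFin_mem _ _ _
      · exact Finset.orderEmbOfFin_mem _ _ _
      · exact g.strictMono (by simp)
      · exact g.strictMono (by simp)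
    obtain ⟨x, y, z, hx, hy, hz, hxy, hyz⟩ := hsorted
    rw [memF] at hx hy hz
    have hw : ∀ w ∈ T, w ∈ F c := by
      intro w hw
      by_contra hwc
      have hne : w.val / 4 ≠ c.val := fun h => hwc ((memF w c).2 ⟨hw, h⟩)
      have h1 : x ≠ w := by rintro rfl; exact hne hx.2
      have h2 : y ≠ w := by rintro rfl; exact hne hy.2
      have h3 : z ≠ w := by rintro rfl; exact hne hz.2
      rcases three_in_class x y hxy (by omega) z hyz (by omega) w (by omega) with h | h | h
      · exact hcon x hx.1 y hy.1 w hw hxy.ne h1 h2 h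
      · exact hcon x hx.1 z hz.1 w hw (hxy.trans hyz).ne h1 h3 h
      · exact hcon y hy.1 z hz.1 w hw hyz.ne h2 h3 h
    have hc : T.card ≤ (Finset.Ico (4 * c.val) (4 * c.val + 4)).card := by
      apply Finset.card_le_card_of_injOn (fun x : Fin 28 => x.val)
      · intro w hwT
        have := ((memF w c).1 (hw w hwT)).2
        simp only [Finset.coe_Ico, Set.mem_Ico]
        omega
      · intro a _ b _ h; exact Fin.ext h
    simp [hT] at hc
  refine count_contra (fun c => ⟨(F c).card, by have := h3 c; omega⟩) hsum ?_
  intro c hc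
  have hc2 : (F c).card = 2 := by simpa [Fin.ext_iff] using hc
  have hlt : ∃ x y, x ∈ F c ∧ y ∈ F c ∧ x < y := by
    let g := (F c).orderEmbOfFin hc2
    exact ⟨g 0, g 1, Finset.orderEmbOfFin_mem _ _ _, Finset.orderEmbOfFin_mem _ _ _,
      g.strictMono (by simp)⟩
  obtain ⟨x, y, hx, hy, hxy⟩ := hlt
  rw [memF] at hx hy
  obtain ⟨d, hd, hz⟩ := two_in_class x y hxy (by omega)
  rw [hx.2] at hd hz
  have hempty : ∀ e : Fin 7, e ≠ c → (e = d ∨ e.val + 1 = (c.val + 1) ^^^ (d.val + 1)) →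
      (F e).card = 0 := by
    intro e hec he
    rw [Finset.card_eq_zero, Finset.eq_empty_iff_forall_notMem]
    intro z hze
    rw [memF] at hze
    have hec' : e.val ≠ c.val := fun h => hec (Fin.ext h)
    refine hcon x hx.1 y hy.1 z hze.1 hxy.ne ?_ ?_ (hz z ?_)
    · rintro rfl; omega
    · rintro rfl; omega
    · rw [hze.2]; exact he.imp (fun h => by rw [h]) id
  have hdc : d ≠ c := fun h => hd (by rw [h])
  refine ⟨d, hdc, Fin.ext (hempty d hdc (Or.inl rfl)), fun e he => Fin.ext (hempty e ?_ (Or.inr he))⟩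
  rintro rfl
  revert he
  clear * -
  revert e d
  decide

/-- The maximum size of a 2-arc in PHG(2, ℤ/4ℤ) is 7: there is a set of 7 points
with at most 2 on each line, but every set of 8 points contains 3 points on a
common line. -/
theorem max_two_arc_Z4 :
    (∃ A : Set (Submodule R4 (Fin 3 → R4)), (∀ P ∈ A, IsPoint P) ∧ A.ncard = 7 ∧
      ∀ L : Submodule R4 (Fin 3 → R4), IsLine L → {P ∈ A | P ≤ L}.ncard ≤ 2) ∧
    (∀ S : Set (Submodule R4 (Fin 3 → R4)), (∀ P ∈ S, IsPoint P) → S.ncard = 8 →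
      ∃ L P Q T, IsLine L ∧ P ∈ S ∧ Q ∈ S ∧ T ∈ S ∧ P ≠ Q ∧ P ≠ T ∧ Q ≠ T ∧
        P ≤ L ∧ Q ≤ L ∧ T ≤ L) := by

  constructor
  · have hinj : Function.Injective (fun i : Fin 7 => Submodule.span R4 {arc i}) := by
      intro x y h
      have : arc y ∈ Submodule.span R4 {arc x} := by
        have h' : Submodule.span R4 {arc x} = Submodule.span R4 {arc y} := h
        rw [h']; exact Submodule.mem_span_singleton_self _
      obtain ⟨c, hc⟩ := Submodule.mem_span_singleton.1 this
      exact arc_inj x y c hc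
    refine ⟨Set.range (fun i : Fin 7 => Submodule.span R4 {arc i}), ?_, ?_, ?_⟩
    · rintro _ ⟨x, rfl⟩
      obtain ⟨i, hi⟩ := arc_unit x
      exact ⟨arc x, ⟨i, IsUnit.of_mul_eq_one _ hi⟩, rfl⟩
    · rw [← Set.image_univ, Set.ncard_image_of_injective _ hinj]
      simp
    · intro L hL
      by_contra h
      push Not at h
      rw [Set.two_lt_ncard_iff ((Set.finite_range _).subset (Set.sep_subset _ _))] at h
      obtain ⟨_, _, _, ⟨⟨a, rfl⟩, ha⟩, ⟨⟨b, rfl⟩, hb⟩, ⟨⟨c, rfl⟩, hc⟩, hab, hac, hbc⟩ := h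
      refine arc_det a b c ?_ ?_ ?_ (det_line L hL _ _ _
        (ha (Submodule.mem_span_singleton_self _)) (hb (Submodule.mem_span_singleton_self _))
        (hc (Submodule.mem_span_singleton_self _)))
      · rintro rfl; exact hab rfl
      · rintro rfl; exact hac rfl
      · rintro rfl; exact hbc rfl
  · intro S hS h8
    classical
    let T : Finset (Fin 28) := Finset.univ.filter (fun x => pt x ∈ S)
    have hST : S = pt '' (T : Set (Fin 28)) := by
      ext P
      constructor
      · intro hP
        obtain ⟨x, rfl⟩ := pt_surj P (hS P hP)
        exact ⟨x, by simpa [T] using hP, rfl⟩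
      · rintro ⟨x, hx, rfl⟩
        simpa [T] using hx
    have hT : T.card = 8 := by
      rw [← h8, hST, Set.ncard_image_of_injective _ pt_inj, Set.ncard_coe_finset]
    obtain ⟨x, hx, y, hy, z, hz, hxy, hxz, hyz, hcol⟩ := no_eight T hT
    obtain ⟨L, hL, h1, h2, h3⟩ := col_line x y z hcol
    exact ⟨L, pt x, pt y, pt z, hL, by simpa [T] using hx, by simpa [T] using hy,
      by simpa [T] using hz, pt_inj.ne hxy, pt_inj.ne hxz, pt_inj.ne hyz, h1, h2, h3⟩
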